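/- arXiv:1106.2595 — 3 statements merged into one kernel-verified Lean document; each statement's English description precedes it below -/
import Mathlib

section
/- (Witt cancellation, algebraic form) Let F be a field of characteristic not equal to 2 and let n > 1. Let q_a = ⟨a₁, a₂, …, aₙ⟩ and q_b = ⟨b₁, b₂, …, bₙ⟩ be non-degenerate diagonal quadratic forms on Fⁿ (i.e., all aᵢ and bᵢ are nonzero), and assume a₁ = b₁. If q_a is isometric to q_b, then the (n−1)-ary forms ⟨a₂, …, aₙ⟩ and ⟨b₂, …, bₙ⟩ are isometric. -/
/-!
Let `e` be an isometry `⟨c⟩ ⊥ Q₁ ≃ ⟨c⟩ ⊥ Q₂`. The vectors `e (1, 0)` and `(1, 0)` have the same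
value `c`. If `c ≠ 0`, then a reflection, or the negative of one, moves the first to the second.
If `c = 0`, then both lie in the radical, and any linear automorphism that translates along the
radical is an isometry, so again the first can be moved to the second. Hence we may assume
`e (1, 0) = (1, 0)`; then `e` induces a linear isomorphism of the quotients by the line through
`(1, 0)`, and this is an isometry `Q₁ ≃ Q₂`.
-/

open QuadraticMap

section Reflection

theorem quadraticMap_sub_eq_add_sub_polar {R M N : Type*} [CommRing R] [AddCommGroup M]
    [Module R M] [AddCommGroup N] [Module R N] (Q : QuadraticMap R M N) (x y : M) :
    Q (x - y) = Q x + Q y - polar Q x y := by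
  rw [sub_eq_add_neg x, QuadraticMap.map_add Q, Q.map_neg, polar_neg_right, ← sub_eq_add_neg]

variable {R M : Type*} [CommRing R] [AddCommGroup M] [Module R M]

/-- The reflection `x ↦ x - (polar Q w x / Q w) • w` in the hyperplane orthogonal to a vector `w`
at which the quadratic form `Q` takes an invertible value. -/
def reflectionIsometryEquiv (Q : QuadraticForm R M) (w : M) [Invertible (Q w)] :
    Q.IsometryEquiv Q where
  toLinearEquiv := Module.reflection (x := w) (f := ⅟(Q w) • Q.polarBilin w) (by
    simp [polar_self, mul_left_comm])
  map_app' x := by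
    have hw : ⅟(Q w) * Q w = 1 := invOf_mul_self (Q w)
    change Q (Module.reflection _ x) = Q x
    rw [Module.reflection_apply, quadraticMap_sub_eq_add_sub_polar, Q.map_smul,
      polar_smul_right, polar_comm Q x w]
    simp only [LinearMap.smul_apply, polarBilin_apply_apply, smul_eq_mul]
    linear_combination ⅟(Q w) * polar Q w x ^ 2 * hw

theorem reflectionIsometryEquiv_apply (Q : QuadraticForm R M) (w x : M) [Invertible (Q w)] :
    reflectionIsometryEquiv Q w x = x - (⅟(Q w) * polar Q w x) • w :=
  Module.preReflection_apply w _ x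

theorem reflectionIsometryEquiv_sub_apply_left {Q : QuadraticForm R M} {u v : M} (huv : Q u = Q v)
    [Invertible (Q (u - v))] : reflectionIsometryEquiv Q (u - v) u = v := by
  have hpolar : polar Q (u - v) u = Q (u - v) := by
    rw [polar_sub_left, polar_self, polar_comm Q v u, quadraticMap_sub_eq_add_sub_polar, ← huv,
      two_nsmul]
  rw [reflectionIsometryEquiv_apply, hpolar, invOf_mul_self, one_smul, sub_sub_cancel]

end Reflection

section Transitivity

variable {K V : Type*} [Field K] [AddCommGroup V] [Module K V] {Q : QuadraticForm K V} {u v : V}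

theorem exists_isometryEquiv_apply_eq (hK : (2 : K) ≠ 0) (huv : Q u = Q v) (hu : Q u ≠ 0) :
    ∃ τ : Q.IsometryEquiv Q, τ u = v := by
  by_cases hsub : Q (u - v) = 0
  · have hadd : Q (u - -v) ≠ 0 := by
      have parallelogram : Q (u - -v) + Q (u - v) = 2 * 2 * Q u := by
        rw [quadraticMap_sub_eq_add_sub_polar, quadraticMap_sub_eq_add_sub_polar,
          polar_neg_right, Q.map_neg, ← huv]
        ring
      rw [hsub, add_zero] at parallelogram
      rw [parallelogram]
      exact mul_ne_zero (mul_ne_zero hK hK) hu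
    have := invertibleOfNonzero hadd
    let neg : Q.IsometryEquiv Q := { LinearEquiv.neg K with map_app' := Q.map_neg }
    refine ⟨(reflectionIsometryEquiv Q (u - -v)).trans neg, ?_⟩
    change -reflectionIsometryEquiv Q (u - -v) u = v
    rw [reflectionIsometryEquiv_sub_apply_left (by rw [huv, Q.map_neg]), neg_neg]
  · have := invertibleOfNonzero hsub
    exact ⟨reflectionIsometryEquiv Q (u - v), reflectionIsometryEquiv_sub_apply_left huv⟩

theorem exists_dual_apply_eq_one_and_apply_ne_zero (hu : u ≠ 0) (hv : v ≠ 0) :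
    ∃ f : Module.Dual K V, f u = 1 ∧ f v ≠ 0 := by
  obtain ⟨f, hfu⟩ := Module.Projective.exists_dual_eq_one K hu
  obtain ⟨g, hgv⟩ := Module.Projective.exists_dual_eq_one K hv
  by_cases hfv : f v = 0
  · by_cases hgu : g u = 0
    · exact ⟨f + g, by simp [hfu, hgu], by simp [hfv, hgv]⟩
    · exact ⟨(g u)⁻¹ • g, by simp [hgu], by simp [hgu, hgv]⟩
  · exact ⟨f, hfu, hfv⟩

theorem exists_isometryEquiv_apply_eq_of_mem_radical (hu : u ∈ Q.radical) (hv : v ∈ Q.radical)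
    (hu₀ : u ≠ 0) (hv₀ : v ≠ 0) : ∃ τ : Q.IsometryEquiv Q, τ u = v := by
  obtain ⟨f, hfu, hfv⟩ := exists_dual_apply_eq_one_and_apply_ne_zero (K := K) hu₀ hv₀
  have hunit : IsUnit (1 + f (v - u)) := by simpa [hfu] using hfv
  refine ⟨⟨LinearEquiv.dilatransvection hunit, fun x => ?_⟩, ?_⟩
  · change Q (LinearEquiv.dilatransvection hunit x) = Q x
    rw [LinearEquiv.dilatransvection.apply, add_comm]
    exact (mem_radical_iff'.mp (Submodule.smul_mem _ (f x) (sub_mem hv hu))).2 x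
  · change LinearEquiv.dilatransvection hunit u = v
    rw [LinearEquiv.dilatransvection.apply, hfu, one_smul, add_sub_cancel]

end Transitivity

section CommonSummand

variable {R M V W N : Type*} [CommRing R] [AddCommGroup M] [Module R M] [AddCommGroup V]
  [Module R V] [AddCommGroup W] [Module R W] [AddCommGroup N] [Module R N]

theorem inl_mem_radical_prod {P : QuadraticMap R M N} (Q : QuadraticMap R V N) {x : M}
    (hx : x ∈ P.radical) : (x, 0) ∈ (P.prod Q).radical := by
  rw [mem_radical_iff'] at hx ⊢
  simp [hx.1, hx.2]

theorem snd_symm_zero_snd_apply (e : (M × V) ≃ₗ[R] (M × W)) (he : ∀ x, e (x, 0) = (x, 0))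
    (p : M × V) : (e.symm (0, (e p).2)).2 = p.2 := by
  have hsplit : (0, (e p).2) = e (p - ((e p).1, 0)) := by
    rw [map_sub, he]
    ext <;> simp
  rw [hsplit, e.symm_apply_apply]
  simp

/-- The linear equivalence `V ≃ W` induced on the quotients by the common summand `M` by a linear
equivalence `M × V ≃ M × W` that is the identity on `M`. -/
def sndLinearEquivOfFixesInl (e : (M × V) ≃ₗ[R] (M × W)) (he : ∀ x, e (x, 0) = (x, 0)) :
    V ≃ₗ[R] W where
  toLinearMap := LinearMap.snd R M W ∘ₗ e.toLinearMap ∘ₗ LinearMap.inr R M V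
  invFun w := (e.symm (0, w)).2
  left_inv v := snd_symm_zero_snd_apply e he (0, v)
  right_inv w := by
    have he' (x : M) : e.symm (x, 0) = (x, 0) := e.symm_apply_eq.mpr (he x).symm
    exact snd_symm_zero_snd_apply e.symm he' (0, w)

theorem equivalent_of_prod_isometryEquiv_fixes_inl (h2 : IsUnit (2 : R)) {P : QuadraticMap R M N}
    {Q₁ : QuadraticMap R V N} {Q₂ : QuadraticMap R W N}
    (e : (P.prod Q₁).IsometryEquiv (P.prod Q₂)) (he : ∀ x, e (x, 0) = (x, 0)) :
    Q₁.Equivalent Q₂ := by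
  refine ⟨⟨sndLinearEquivOfFixesInl e.toLinearEquiv he, fun v => ?_⟩⟩
  change Q₂ (e (0, v)).2 = Q₁ v
  set t := (e (0, v)).1
  set w := (e (0, v)).2
  have he_sub : e (-t, v) = (0, w) := by
    have hsplit : ((-t, v) : M × V) = (-t, 0) + (0, v) := by simp
    rw [hsplit, map_add, he]
    ext <;> simp [t, w]
  have hvalue : P t + Q₂ w = Q₁ v := by simpa [-IsometryEquiv.map_app] using e.map_app (0, v)
  have hvalue_sub : Q₂ w = P t + Q₁ v := by
    simpa [-IsometryEquiv.map_app, he_sub] using e.map_app (-t, v)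
  have hPt : P t = 0 := by
    rw [← h2.smul_eq_zero, two_smul]
    rw [hvalue_sub, ← add_assoc] at hvalue
    exact add_eq_right.mp hvalue
  rw [hvalue_sub, hPt, zero_add]

end CommonSummand

theorem weightedSumSquares_equivalent_prod {R : Type*} [CommSemiring R] {n : ℕ}
    (a : Fin (n + 1) → R) :
    (weightedSumSquares R a).Equivalent
      ((a 0 • sq (R := R)).prod (weightedSumSquares R fun i : Fin n => a i.succ)) := by
  refine Equivalent.symm ⟨⟨Fin.consLinearEquiv R fun _ => R, fun x => ?_⟩⟩
  simp [Fin.consLinearEquiv, Fin.consEquiv, weightedSumSquares_apply, Fin.sum_univ_succ]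

theorem witt_cancellation_diagonal_general {F V W : Type*} [Field F] (hF : (2 : F) ≠ 0)
    [AddCommGroup V] [Module F V] [AddCommGroup W] [Module F W] {c : F}
    {Q₁ : QuadraticForm F V} {Q₂ : QuadraticForm F W}
    (h : ((c • sq (R := F)).prod Q₁).Equivalent ((c • sq (R := F)).prod Q₂)) :
    Q₁.Equivalent Q₂ := by
  obtain ⟨e⟩ := h
  obtain ⟨τ, hτ⟩ : ∃ τ : ((c • sq (R := F)).prod Q₂).IsometryEquiv ((c • sq (R := F)).prod Q₂),
      τ (e (1, 0)) = (1, 0) := by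
    rcases eq_or_ne c 0 with rfl | hc
    · have hone : (1 : F) ∈ ((0 : F) • sq (R := F)).radical := by simp [mem_radical_iff']
      have hmem : e (1, 0) ∈ (((0 : F) • sq (R := F)).prod Q₂).radical :=
        e.map_radical ▸ Submodule.mem_map_of_mem (inl_mem_radical_prod Q₁ hone)
      have he₀ : e (1, 0) ≠ 0 := e.toLinearEquiv.map_ne_zero_iff.mpr (by simp)
      exact exists_isometryEquiv_apply_eq_of_mem_radical hmem
        (inl_mem_radical_prod Q₂ hone) he₀ (by simp)
    · exact exists_isometryEquiv_apply_eq hF (by simp) (by simpa using hc)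
  refine equivalent_of_prod_isometryEquiv_fixes_inl hF.isUnit (e.trans τ) fun x => ?_
  calc (e.trans τ) (x, 0) = (e.trans τ) (x • (1, 0)) := by simp
    _ = x • τ (e (1, 0)) := map_smul (e.trans τ) x (1, 0)
    _ = (x, 0) := by simp [hτ]

/-- Witt cancellation for diagonal quadratic forms: if `⟨a₁, …, aₙ⟩ ≅ ⟨b₁, …, bₙ⟩`
are non-degenerate diagonal forms with `a₁ = b₁`, then `⟨a₂, …, aₙ⟩ ≅ ⟨b₂, …, bₙ⟩`. -/
theorem witt_cancellation_diagonal {F : Type*} [Field F] (hF : (2 : F) ≠ 0)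
    {n : ℕ} (hn : 1 < n) (a b : Fin n → F)
    (ha : ∀ i, a i ≠ 0) (hb : ∀ i, b i ≠ 0)
    (hab : a ⟨0, by omega⟩ = b ⟨0, by omega⟩)
    (h : QuadraticMap.Equivalent (QuadraticMap.weightedSumSquares F a)
      (QuadraticMap.weightedSumSquares F b)) :
    QuadraticMap.Equivalent
      (QuadraticMap.weightedSumSquares F
        (fun i : Fin (n - 1) => a ⟨i.val + 1, by have := i.isLt; omega⟩))
      (QuadraticMap.weightedSumSquares F
        (fun i : Fin (n - 1) => b ⟨i.val + 1, by have := i.isLt; omega⟩)) := by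
  obtain ⟨m, rfl⟩ := Nat.exists_eq_add_of_lt hn
  exact witt_cancellation_diagonal_general hF <| (weightedSumSquares_equivalent_prod a).symm.trans
    (h.trans (hab ▸ weightedSumSquares_equivalent_prod b))
end

section
/- (Witt cancellation, general form) Let F be a field of characteristic not equal to 2, and let q, q₁, q₂ be quadratic forms on finite-dimensional F-vector spaces with q non-degenerate. If the orthogonal sum q ⊥ q₁ is isometric to the orthogonal sum q ⊥ q₂, then q₁ is isometric to q₂. -/
/-!
Diagonalise `Q` by an orthogonal basis `v` of anisotropic vectors. An isometry
`f : Q ⊥ Q₁ → Q ⊥ Q₂` carries the vectors `(vᵢ, 0)` to an orthogonal family with the same values.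
If `P u = P e ≠ 0`, then by the parallelogram law one of `u - e`, `u + e` is anisotropic, so that
either the reflection in `u - e`, or the reflection in `u + e` followed by the one in `e`, moves `u`
to `e`; both fix every vector orthogonal to `u` and `e`. Moving the `f (vᵢ, 0)` back to the
`(vᵢ, 0)` one at a time, we may assume that `f` fixes `V × 0` pointwise. It then maps `0 × V₁`,
the orthogonal complement of `V × 0`, onto `0 × V₂`.
-/

open QuadraticMap Function

namespace WittCancellation

section QuadraticMap

variable {R V V₁ V₂ W W' N : Type*} [CommRing R] [AddCommGroup N] [Module R N]
  [AddCommGroup V] [Module R V] [AddCommGroup V₁] [Module R V₁] [AddCommGroup V₂] [Module R V₂]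
  [AddCommGroup W] [Module R W] [AddCommGroup W'] [Module R W']

theorem map_add_add_map_sub (P : QuadraticMap R W N) (x y : W) :
    P (x + y) + P (x - y) = (2 : R) • (P x + P y) := by
  rw [sub_eq_add_neg, QuadraticMap.map_add P x y, QuadraticMap.map_add P x (-y),
    QuadraticMap.map_neg, polar_neg_right]
  module

theorem isOrtho_map_iff {P : QuadraticMap R W N} {P' : QuadraticMap R W' N}
    (f : P.IsometryEquiv P') {x y : W} : P'.IsOrtho (f x) (f y) ↔ P.IsOrtho x y := by
  simp only [isOrtho_def, ← _root_.map_add, f.map_app]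

variable {Q : QuadraticMap R V N} {Q₁ : QuadraticMap R V₁ N} {Q₂ : QuadraticMap R V₂ N}

theorem fst_apply_inr_eq_zero_of_fixes_inl (hQ : Q.polarBilin.SeparatingLeft)
    (g : (Q.prod Q₁).IsometryEquiv (Q.prod Q₂)) (hg : ∀ v, g (v, 0) = (v, 0)) (w : V₁) :
    (g (0, w)).1 = 0 := by
  refine hQ _ fun v => ?_
  have h_ortho : (Q.prod Q₂).IsOrtho (g (0, w)) (v, 0) := by
    rw [← hg v, isOrtho_map_iff]
    exact IsOrtho.inr_inl v w
  simpa using h_ortho.polar_eq_zero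

theorem equivalent_of_fixes_inl (hQ : Q.polarBilin.SeparatingLeft)
    (g : (Q.prod Q₁).IsometryEquiv (Q.prod Q₂)) (hg : ∀ v, g (v, 0) = (v, 0)) :
    Q₁.Equivalent Q₂ := by
  have hg_symm (v : V) : g.symm (v, 0) = (v, 0) := by rw [g.symm_apply_eq, hg]
  have h_inr (w : V₁) : (0, (g (0, w)).2) = g (0, w) :=
    Prod.ext (fst_apply_inr_eq_zero_of_fixes_inl hQ g hg w).symm rfl
  have h_inr_symm (w : V₂) : (0, (g.symm (0, w)).2) = g.symm (0, w) :=
    Prod.ext (fst_apply_inr_eq_zero_of_fixes_inl hQ g.symm hg_symm w).symm rfl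
  let toFun : V₁ →ₗ[R] V₂ := .snd R V V₂ ∘ₗ g.toLinearEquiv.toLinearMap ∘ₗ .inr R V V₁
  let invFun : V₂ →ₗ[R] V₁ := .snd R V V₁ ∘ₗ g.symm.toLinearEquiv.toLinearMap ∘ₗ .inr R V V₂
  have h_right_inv (w : V₂) : (g (0, (g.symm (0, w)).2)).2 = w := by
    rw [h_inr_symm, g.apply_symm_apply]
  have h_left_inv (w : V₁) : (g.symm (0, (g (0, w)).2)).2 = w := by
    rw [h_inr, g.symm_apply_apply]
  refine ⟨⟨.ofLinearMap toFun invFun (LinearMap.ext h_right_inv) (LinearMap.ext h_left_inv),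
    fun w => ?_⟩⟩
  calc Q₂ (g (0, w)).2 = (Q.prod Q₂) (0, (g (0, w)).2) := by simp
    _ = (Q.prod Q₁) (0, w) := by rw [h_inr, g.map_app]
    _ = Q₁ w := by simp

end QuadraticMap

section Reflection

variable {R W : Type*} [CommRing R] [AddCommGroup W] [Module R W]

theorem invOf_smul_polarBilin_apply_self (P : QuadraticForm R W) (d : W) [Invertible (P d)] :
    (⅟(P d) • P.polarBilin d) d = 2 := by
  simp [polar_self, mul_left_comm]

/-- The reflection `y ↦ y - (polar P d y / P d) • d` in the hyperplane orthogonal to `d`, as a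
self-isometry of `P`. Since `polar P d y / P d = 2 B(d, y) / B(d, d)`, this is the usual orthogonal
reflection, written so that `2` need not be invertible. -/
def reflectionIsometry (P : QuadraticForm R W) (d : W) [Invertible (P d)] : P.IsometryEquiv P where
  toLinearEquiv := Module.reflection (invOf_smul_polarBilin_apply_self P d)
  map_app' y := by
    change P (Module.reflection (invOf_smul_polarBilin_apply_self P d) y) = P y
    rw [Module.reflection_apply, sub_eq_add_neg, ← neg_smul, QuadraticMap.map_add P,
      QuadraticMap.map_smul, polar_smul_right, polar_comm P y d]
    simp only [LinearMap.smul_apply, polarBilin_apply_apply, smul_eq_mul]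
    linear_combination ⅟(P d) * polar P d y ^ 2 * invOf_mul_self (P d)

variable (P : QuadraticForm R W)

theorem reflectionIsometry_apply (d y : W) [Invertible (P d)] :
    reflectionIsometry P d y = y - (⅟(P d) * polar P d y) • d :=
  Module.reflection_apply y (invOf_smul_polarBilin_apply_self P d)

theorem reflectionIsometry_apply_self (d : W) [Invertible (P d)] :
    reflectionIsometry P d d = -d :=
  Module.reflection_apply_self (invOf_smul_polarBilin_apply_self P d)

variable {P}

theorem reflectionIsometry_apply_of_isOrtho {d y : W} [Invertible (P d)] (h : P.IsOrtho d y) :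
    reflectionIsometry P d y = y := by
  simp [reflectionIsometry_apply, h.polar_eq_zero]

theorem reflectionIsometry_sub_apply {u e : W} [Invertible (P (u - e))] (h : P u = P e) :
    reflectionIsometry P (u - e) u = e := by
  have h_polar : polar P (u - e) u = P (u - e) := by
    rw [sub_eq_add_neg, polar_add_left, polar_neg_left, polar_self, QuadraticMap.map_add P,
      QuadraticMap.map_neg, polar_neg_right, polar_comm P e u, ← h]
    ring
  rw [reflectionIsometry_apply, h_polar, invOf_mul_self, one_smul, sub_sub_cancel]

end Reflection

section Field

variable {F W : Type*} [Field F] [AddCommGroup W] [Module F W] {P : QuadraticForm F W}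

theorem map_sub_ne_zero_or_map_add_ne_zero (hF : (2 : F) ≠ 0) {u e : W} (h : P u = P e)
    (he : P e ≠ 0) : P (u - e) ≠ 0 ∨ P (u + e) ≠ 0 := by
  by_contra! h_zero
  have h_parallelogram := map_add_add_map_sub P u e
  rw [h_zero.1, h_zero.2, h, add_zero, ← two_mul, smul_eq_mul] at h_parallelogram
  exact mul_ne_zero hF (mul_ne_zero hF he) h_parallelogram.symm

theorem exists_isometryEquiv_apply_eq_and_fixes_ortho (hF : (2 : F) ≠ 0) {u e : W}
    (h : P u = P e) (he : P e ≠ 0) :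
    ∃ s : P.IsometryEquiv P, s u = e ∧ ∀ x, P.IsOrtho u x → P.IsOrtho e x → s x = x := by
  rcases map_sub_ne_zero_or_map_add_ne_zero hF h he with h_sub | h_add
  · let := invertibleOfNonzero h_sub
    refine ⟨reflectionIsometry P (u - e), reflectionIsometry_sub_apply h, fun x hux hex => ?_⟩
    refine reflectionIsometry_apply_of_isOrtho (isOrtho_polarBilin.mp ?_)
    simp [hux.polar_eq_zero, hex.polar_eq_zero]
  · rw [← sub_neg_eq_add] at h_add
    let := invertibleOfNonzero h_add
    let := invertibleOfNonzero he
    refine ⟨(reflectionIsometry P (u - -e)).trans (reflectionIsometry P e), ?_,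
      fun x hux hex => ?_⟩
    · change reflectionIsometry P e (reflectionIsometry P (u - -e) u) = e
      rw [reflectionIsometry_sub_apply (by rw [QuadraticMap.map_neg, h]), _root_.map_neg,
        reflectionIsometry_apply_self, neg_neg]
    · have h_ortho : P.IsOrtho (u - -e) x := isOrtho_polarBilin.mp <| by
        simp [hux.polar_eq_zero, hex.polar_eq_zero]
      change reflectionIsometry P e (reflectionIsometry P (u - -e) x) = x
      rw [reflectionIsometry_apply_of_isOrtho h_ortho, reflectionIsometry_apply_of_isOrtho hex]

theorem exists_isometryEquiv_apply_eq_of_pairwise_isOrtho (hF : (2 : F) ≠ 0) {ι : Type*}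
    {u e : ι → W} (hu : Pairwise (P.IsOrtho on u)) (he : Pairwise (P.IsOrtho on e))
    (h : ∀ i, P (u i) = P (e i)) (h_ne : ∀ i, P (e i) ≠ 0) (t : Finset ι) :
    ∃ s : P.IsometryEquiv P, ∀ i ∈ t, s (u i) = e i := by
  classical
  induction t using Finset.induction_on with
  | empty => exact ⟨.refl P, by simp⟩
  | insert j t hj ih =>
    obtain ⟨s, hs⟩ := ih
    obtain ⟨r, hr, hr_fix⟩ := exists_isometryEquiv_apply_eq_and_fixes_ortho hF
      (u := s (u j)) (by rw [s.map_app, h j]) (h_ne j)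
    refine ⟨s.trans r, Finset.forall_mem_insert _ _ _ |>.mpr ⟨hr, fun i hi => ?_⟩⟩
    have hji : j ≠ i := (ne_of_mem_of_not_mem hi hj).symm
    have h_ortho : P.IsOrtho (s (u j)) (e i) := by
      rw [← hs i hi, isOrtho_map_iff]
      exact hu hji
    change r (s (u i)) = e i
    rw [hs i hi, hr_fix (e i) h_ortho (he hji)]

theorem exists_basis_pairwise_isOrtho_map_ne_zero [FiniteDimensional F W] (hF : (2 : F) ≠ 0)
    (hP : P.polarBilin.SeparatingLeft) :
    ∃ v : Module.Basis (Fin (Module.finrank F W)) F W,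
      Pairwise (P.IsOrtho on v) ∧ ∀ i, P (v i) ≠ 0 := by
  let := invertibleOfNonzero hF
  obtain ⟨v, hv⟩ := LinearMap.BilinForm.exists_orthogonal_basis
    (B := P.polarBilin) ⟨polar_comm P⟩
  refine ⟨v, fun i j hij => isOrtho_polarBilin.mp (hv hij), fun i hi => ?_⟩
  refine hv.not_isOrtho_basis_self_of_separatingLeft hP i ?_
  rw [polarBilin_apply_apply, polar_self, hi, smul_zero]

end Field

end WittCancellation

open WittCancellation in
theorem witt_cancellation_general_general {F V V₁ V₂ : Type*} [Field F]
    [AddCommGroup V] [Module F V] [FiniteDimensional F V]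
    [AddCommGroup V₁] [Module F V₁] [AddCommGroup V₂] [Module F V₂] (hF : (2 : F) ≠ 0)
    {Q : QuadraticForm F V} {Q₁ : QuadraticForm F V₁} {Q₂ : QuadraticForm F V₂}
    (hQ : Q.polarBilin.SeparatingLeft) (h : (Q.prod Q₁).Equivalent (Q.prod Q₂)) :
    Q₁.Equivalent Q₂ := by
  obtain ⟨f⟩ := h
  obtain ⟨v, hv_ortho, hv_ne⟩ := exists_basis_pairwise_isOrtho_map_ne_zero hF hQ
  obtain ⟨s, hs⟩ : ∃ s : (Q.prod Q₂).IsometryEquiv (Q.prod Q₂),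
      ∀ i ∈ Finset.univ, s (f (v i, 0)) = (v i, 0) := by
    refine exists_isometryEquiv_apply_eq_of_pairwise_isOrtho hF (fun i j hij => ?_)
      (fun i j hij => ?_) (fun i => ?_) (fun i => ?_) Finset.univ
    · exact (isOrtho_map_iff f).mpr ((isOrtho_inl_inl_iff _ _).mpr (hv_ortho hij))
    · exact (isOrtho_inl_inl_iff _ _).mpr (hv_ortho hij)
    · simp [f.map_app]
    · simpa using hv_ne i
  have h_fix : (f.trans s).toLinearEquiv.toLinearMap ∘ₗ .inl F V V₁ = .inl F V V₂ :=
    v.ext fun i => hs i (Finset.mem_univ i)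
  exact equivalent_of_fixes_inl hQ (f.trans s) (LinearMap.congr_fun h_fix)

/-- Witt cancellation, general form: if `q` is non-degenerate and `q ⊥ q₁ ≅ q ⊥ q₂`,
then `q₁ ≅ q₂`. Non-degeneracy is stated via the associated bilinear form
`B(v,w) = (q(v+w) − q(v) − q(w))/2`. -/
theorem witt_cancellation_general {F V V₁ V₂ : Type*} [Field F]
    [AddCommGroup V] [Module F V] [FiniteDimensional F V]
    [AddCommGroup V₁] [Module F V₁] [FiniteDimensional F V₁]
    [AddCommGroup V₂] [Module F V₂] [FiniteDimensional F V₂]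
    (hF : (2 : F) ≠ 0)
    (Q : QuadraticForm F V) (Q₁ : QuadraticForm F V₁) (Q₂ : QuadraticForm F V₂)
    (hQ : ∀ v : V, (∀ w : V, QuadraticMap.polar Q v w / 2 = 0) → v = 0)
    (h : QuadraticMap.Equivalent (Q.prod Q₁) (Q.prod Q₂)) :
    QuadraticMap.Equivalent Q₁ Q₂ := by
  exact witt_cancellation_general_general hF
    (fun v hv => hQ v fun w => by rw [← QuadraticMap.polarBilin_apply_apply, hv w, zero_div]) h
end

section
/- (Witt decomposition, existence) Let F be a field of characteristic not equal to 2 and let (V, q) be a non-degenerate quadratic space over F. Then there is a decomposition V ≅ H₁ ⊥ H₂ ⊥ ⋯ ⊥ H_k ⊥ V_a, where each Hᵢ is a hyperbolic plane (a two-dimensional form equivalent to ⟨1, −1⟩), k ≥ 0, and V_a is anisotropic (q is nonzero on every nonzero vector of V_a). -/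
/-!
An isotropic vector `v` outside the radical has a partner `w` with `Q w = 0` and `polar Q v w = 1`,
and then `x ↦ x - polar Q w x • v - polar Q v x • w` projects onto the orthogonal complement of
`v, w`, so that a hyperbolic plane splits off. Iterating, the dimension drops until every isotropic
vector lies in the radical. The radical of an orthogonal summand embeds in the radical of `Q`, so
the remaining summand is anisotropic when `Q` has trivial radical. The
hyperbolic planes split off in the form `x * y`, which is `⟨1, -1⟩` in the coordinates
`(x + y) / 2` and `(x - y) / 2`.
-/

open QuadraticMap

section OrthogonalSums

variable {R M M₁ M₂ M₃ P : Type*} [CommSemiring R]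
  [AddCommMonoid M] [AddCommMonoid M₁] [AddCommMonoid M₂] [AddCommMonoid M₃] [AddCommMonoid P]
  [Module R M] [Module R M₁] [Module R M₂] [Module R M₃] [Module R P]

theorem equivalent_prod_assoc (Q₁ : QuadraticMap R M₁ P) (Q₂ : QuadraticMap R M₂ P)
    (Q₃ : QuadraticMap R M₃ P) :
    Equivalent ((Q₁.prod Q₂).prod Q₃) (Q₁.prod (Q₂.prod Q₃)) :=
  ⟨⟨LinearEquiv.prodAssoc R M₁ M₂ M₃, fun x => (add_assoc (Q₁ x.1.1) (Q₂ x.1.2) (Q₃ x.2)).symm⟩⟩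

theorem equivalent_pi_prod_of_isEmpty {ι : Type*} [Fintype ι] [IsEmpty ι] {N : ι → Type*}
    [∀ i, AddCommMonoid (N i)] [∀ i, Module R (N i)] (Q' : ∀ i, QuadraticMap R (N i) P)
    (Q : QuadraticMap R M P) : Equivalent ((pi Q').prod Q) Q :=
  ⟨⟨LinearEquiv.uniqueProd, fun x => by simp⟩⟩

theorem equivalent_prod_pi_fin_succ {n : ℕ} {N : Fin (n + 1) → Type*}
    [∀ i, AddCommMonoid (N i)] [∀ i, Module R (N i)] (Q : ∀ i, QuadraticMap R (N i) P) :
    Equivalent ((Q 0).prod (pi fun i : Fin n => Q i.succ)) (pi Q) :=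
  ⟨⟨Fin.consLinearEquiv R N, fun x => by simp [Fin.sum_univ_succ]⟩⟩

end OrthogonalSums

section PolarForm

variable {R M M₁ M₂ P : Type*} [CommRing R]
  [AddCommGroup M] [AddCommGroup M₁] [AddCommGroup M₂] [AddCommGroup P]
  [Module R M] [Module R M₁] [Module R M₂] [Module R P]

theorem polar_self_eq_zero {Q : QuadraticMap R M P} {v : M} (hv : Q v = 0) : polar Q v v = 0 := by
  rw [polar_self, hv, smul_zero]

theorem radical_eq_bot_of_separatingLeft {Q : QuadraticMap R M P}
    (hQ : Q.polarBilin.SeparatingLeft) : Q.radical = ⊥ :=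
  le_bot_iff.1 (radical_le_ker_polarBilin.trans_eq (LinearMap.separatingLeft_iff_ker_eq_bot.1 hQ))

-- In characteristic `2` the inclusion can be strict: on `⟨1⟩ ⊥ ⟨1⟩` the vector `(1, 1)` is radical.
theorem prod_radical_le_radical_prod (Q₁ : QuadraticMap R M₁ P) (Q₂ : QuadraticMap R M₂ P) :
    Q₁.radical.prod Q₂.radical ≤ (Q₁.prod Q₂).radical := by
  rintro ⟨x₁, x₂⟩ ⟨hx₁, hx₂⟩
  rw [SetLike.mem_coe, mem_radical_iff'] at hx₁ hx₂
  simp [mem_radical_iff', hx₁, hx₂]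

theorem radical_right_eq_bot_of_equivalent_prod {Q : QuadraticMap R M P} {Q₁ : QuadraticMap R M₁ P}
    {Q₂ : QuadraticMap R M₂ P} (h : Equivalent Q (Q₁.prod Q₂)) (hQ : Q.radical = ⊥) :
    Q₂.radical = ⊥ := by
  obtain ⟨e⟩ := h
  have hprod : (Q₁.prod Q₂).radical = ⊥ := by rw [← e.map_radical, hQ, Submodule.map_bot]
  have hle := (prod_radical_le_radical_prod Q₁ Q₂).trans_eq hprod
  exact ((Submodule.prod_eq_bot_iff R M₁ M₂).1 (le_bot_iff.1 hle)).2

/-- Every isotropic vector lies in the radical; equivalently, the form induced on the quotient by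
the radical is anisotropic. This is what remains after all hyperbolic planes have been split
off. -/
def AnisotropicModRadical (Q : QuadraticMap R M P) : Prop :=
  ∀ x, Q x = 0 → x ∈ Q.radical

namespace AnisotropicModRadical

variable {Q : QuadraticMap R M P}

theorem of_equivalent {Q₁ : QuadraticMap R M₁ P} (hQ : AnisotropicModRadical Q)
    (h : Equivalent Q Q₁) : AnisotropicModRadical Q₁ := by
  obtain ⟨e⟩ := h
  intro x hx
  rw [← e.map_radical]
  exact ⟨e.symm x, hQ _ (by rw [e.symm.map_app, hx]), e.apply_symm_apply x⟩

theorem anisotropic (hQ : AnisotropicModRadical Q) (hrad : Q.radical = ⊥) : Q.Anisotropic :=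
  fun x hx => by simpa [hrad] using hQ x hx

end AnisotropicModRadical

end PolarForm

section HyperbolicPlane

variable {R M : Type*} [CommRing R] [AddCommGroup M] [Module R M]

variable (R) in
/-- The hyperbolic plane, encoded as the form `(x, y) ↦ x * y` on `R × R` so that it is the correct
notion in every characteristic. -/
def hyperbolicPlane : QuadraticForm R (R × R) :=
  linMulLin (LinearMap.fst R R R) (LinearMap.snd R R R)

theorem hyperbolicPlane_equivalent_weightedSumSquares [Invertible (2 : R)] :
    Equivalent (hyperbolicPlane R) (weightedSumSquares R (![1, -1] : Fin 2 → R)) := by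
  let sumDiff : (Fin 2 → R) ≃ₗ[R] R × R :=
    { toFun x := (x 0 + x 1, x 0 - x 1)
      invFun y := ![⅟2 * (y.1 + y.2), ⅟2 * (y.1 - y.2)]
      map_add' x y := by ext <;> simp <;> ring
      map_smul' c x := by ext <;> simp <;> ring
      left_inv x := by
        ext i
        fin_cases i <;> simp [← two_mul]
      right_inv y := by
        ext <;> simp [← mul_add, ← mul_sub, ← two_mul] }
  refine Equivalent.symm ⟨sumDiff, fun x => ?_⟩
  change (x 0 + x 1) * (x 0 - x 1) = _
  simp only [weightedSumSquares_apply, Fin.sum_univ_two, Matrix.cons_val_zero, Matrix.cons_val_one,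
    smul_eq_mul]
  ring

/-- A hyperbolic pair for `Q`: two isotropic vectors whose polar pairing is `1`. They form a basis
of the hyperbolic plane they span. -/
structure IsHyperbolicPair (Q : QuadraticForm R M) (v w : M) : Prop where
  map_left : Q v = 0
  map_right : Q w = 0
  polar_eq_one : polar Q v w = 1

/-- The orthogonal complement of the vectors `v` and `w` with respect to the polar form of `Q`. -/
def pairOrthogonal (Q : QuadraticForm R M) (v w : M) : Submodule R M :=
  (Q.polarBilin v).ker ⊓ (Q.polarBilin w).ker

variable {Q : QuadraticForm R M} {v w : M}

theorem mem_pairOrthogonal {x : M} :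
    x ∈ pairOrthogonal Q v w ↔ polar Q v x = 0 ∧ polar Q w x = 0 :=
  Iff.rfl

theorem isHyperbolicPair_sub_smul {u : M} (hv : Q v = 0) (hvu : polar Q v u = 1) :
    IsHyperbolicPair Q v (u - Q u • v) where
  map_left := hv
  map_right := by
    rw [sub_eq_add_neg, ← neg_smul, QuadraticMap.map_add Q, QuadraticMap.map_smul,
      polar_smul_right, polar_comm, hvu, hv]
    simp
  polar_eq_one := by
    rw [polar_sub_right, polar_smul_right, hvu, polar_self_eq_zero hv, smul_zero, sub_zero]

theorem exists_isHyperbolicPair {u : M} (hv : Q v = 0) (hvu : IsUnit (polar Q v u)) :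
    ∃ w, IsHyperbolicPair Q v w := by
  obtain ⟨c, hc⟩ := hvu.exists_left_inv
  have hcu : polar Q v (c • u) = 1 := by rw [polar_smul_right, smul_eq_mul, hc]
  exact ⟨_, isHyperbolicPair_sub_smul hv hcu⟩

namespace IsHyperbolicPair

theorem symm (h : IsHyperbolicPair Q v w) : IsHyperbolicPair Q w v :=
  ⟨h.map_right, h.map_left, by rw [polar_comm, h.polar_eq_one]⟩

theorem pairOrthogonal_ne_top [Nontrivial R] (h : IsHyperbolicPair Q v w) :
    pairOrthogonal Q v w ≠ ⊤ := by
  intro htop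
  have hw : w ∈ pairOrthogonal Q v w := htop ▸ Submodule.mem_top
  exact one_ne_zero (h.polar_eq_one.symm.trans (mem_pairOrthogonal.1 hw).1)

theorem polar_left_smul_add_smul_add (h : IsHyperbolicPair Q v w) (a b : R) {x : M}
    (hx : polar Q v x = 0) : polar Q v (a • v + b • w + x) = b := by
  simp [polar_add_right, polar_smul_right, polar_self_eq_zero h.map_left, h.polar_eq_one, hx]

theorem polar_right_smul_add_smul_add (h : IsHyperbolicPair Q v w) (a b : R) {x : M}
    (hx : polar Q w x = 0) : polar Q w (a • v + b • w + x) = a := by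
  rw [add_comm (a • v), h.symm.polar_left_smul_add_smul_add b a hx]

theorem map_smul_add_smul_add (h : IsHyperbolicPair Q v w) (a b : R) {x : M}
    (hx : x ∈ pairOrthogonal Q v w) : Q (a • v + b • w + x) = a * b + Q x := by
  obtain ⟨hvx, hwx⟩ := mem_pairOrthogonal.1 hx
  simp [QuadraticMap.map_add, QuadraticMap.map_smul, h.map_left, h.map_right, polar_add_left,
    polar_smul_left, polar_smul_right, h.polar_eq_one, hvx, hwx, mul_comm]

theorem sub_smul_sub_smul_mem_pairOrthogonal (h : IsHyperbolicPair Q v w) (x : M) :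
    x - polar Q w x • v - polar Q v x • w ∈ pairOrthogonal Q v w := by
  simp [mem_pairOrthogonal, polar_sub_right, polar_smul_right, polar_self_eq_zero h.map_left,
    polar_self_eq_zero h.map_right, h.polar_eq_one, h.symm.polar_eq_one]

theorem equivalent_hyperbolicPlane_prod (h : IsHyperbolicPair Q v w) :
    Equivalent Q ((hyperbolicPlane R).prod (Q.restrict (pairOrthogonal Q v w))) := by
  let combine : (R × R) × pairOrthogonal Q v w →ₗ[R] M :=
    ((LinearMap.toSpanSingleton R M v).coprod (LinearMap.toSpanSingleton R M w)).coprod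
      (pairOrthogonal Q v w).subtype
  have combine_apply (a b : R) (x : pairOrthogonal Q v w) :
      combine ((a, b), x) = a • v + b • w + x := by simp [combine]
  have combine_injective : Function.Injective combine := by
    rw [injective_iff_map_eq_zero]
    rintro ⟨⟨a, b⟩, x⟩ hzero
    rw [combine_apply] at hzero
    have ha : a = 0 := by
      rw [← h.polar_right_smul_add_smul_add a b x.2.2, hzero, polar_zero_right]
    have hb : b = 0 := by
      rw [← h.polar_left_smul_add_smul_add a b x.2.1, hzero, polar_zero_right]
    simpa [ha, hb] using hzero
  have combine_surjective : Function.Surjective combine := fun x =>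
    ⟨((polar Q w x, polar Q v x), ⟨_, h.sub_smul_sub_smul_mem_pairOrthogonal x⟩), by
      rw [combine_apply]; module⟩
  refine Equivalent.symm ⟨LinearEquiv.ofBijective combine ⟨combine_injective, combine_surjective⟩,
    ?_⟩
  rintro ⟨⟨a, b⟩, x⟩
  exact (congrArg Q (combine_apply a b x)).trans (h.map_smul_add_smul_add a b x.2)

end IsHyperbolicPair

end HyperbolicPlane

section Field

variable {F V : Type*} [Field F] [AddCommGroup V] [Module F V]

theorem exists_isHyperbolicPair_of_not_anisotropicModRadical {Q : QuadraticForm F V}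
    (hQ : ¬ AnisotropicModRadical Q) : ∃ v w, IsHyperbolicPair Q v w := by
  simp only [AnisotropicModRadical, not_forall] at hQ
  obtain ⟨v, hv, hrad⟩ := hQ
  obtain ⟨u, hvu⟩ : ∃ u, polar Q v u ≠ 0 := by
    by_contra! hpolar
    exact hrad ⟨hv, LinearMap.ext hpolar⟩
  exact ⟨v, exists_isHyperbolicPair hv hvu.isUnit⟩

variable [FiniteDimensional F V]

theorem exists_equivalent_pi_hyperbolicPlane_prod_anisotropicModRadical (Q : QuadraticForm F V) :
    ∃ (k m : ℕ) (qa : QuadraticForm F (Fin m → F)), AnisotropicModRadical qa ∧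
      Equivalent Q ((pi fun _ : Fin k => hyperbolicPlane F).prod qa) := by
  induction hn : Module.finrank F V using Nat.strong_induction_on generalizing V with
  | _ n ih =>
  by_cases hQ : AnisotropicModRadical Q
  · have hcoord : Equivalent Q (Q.basisRepr (Module.finBasis F V)) :=
      ⟨Q.isometryEquivBasisRepr (Module.finBasis F V)⟩
    exact ⟨0, _, _, hQ.of_equivalent hcoord,
      hcoord.trans (equivalent_pi_prod_of_isEmpty _ _).symm⟩
  · obtain ⟨v, w, hvw⟩ := exists_isHyperbolicPair_of_not_anisotropicModRadical hQ
    have hlt : Module.finrank F (pairOrthogonal Q v w) < n :=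
      hn ▸ Submodule.finrank_lt hvw.pairOrthogonal_ne_top
    obtain ⟨k, m, qa, hqa, hequiv⟩ := ih _ hlt (Q.restrict (pairOrthogonal Q v w)) rfl
    have hsplit := hvw.equivalent_hyperbolicPlane_prod.trans ((Equivalent.refl _).prod hequiv)
    have hcons := equivalent_prod_pi_fin_succ fun _ : Fin (k + 1) => hyperbolicPlane F
    exact ⟨k + 1, m, qa, hqa, hsplit.trans
      ((equivalent_prod_assoc _ _ _).symm.trans (hcons.prod (Equivalent.refl qa)))⟩

theorem witt_decomposition_exists_general (Q : QuadraticForm F V) (hQ : Q.radical = ⊥) :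
    ∃ (k m : ℕ) (qa : QuadraticForm F (Fin m → F)), qa.Anisotropic ∧
      Equivalent Q ((pi fun _ : Fin k => hyperbolicPlane F).prod qa) := by
  obtain ⟨k, m, qa, hqa, hequiv⟩ :=
    exists_equivalent_pi_hyperbolicPlane_prod_anisotropicModRadical Q
  exact ⟨k, m, qa, hqa.anisotropic (radical_right_eq_bot_of_equivalent_prod hequiv hQ), hequiv⟩

end Field

/-- Witt decomposition, existence: every non-degenerate quadratic space `(V, q)` over a
field of characteristic ≠ 2 is isometric to `H₁ ⊥ ⋯ ⊥ H_k ⊥ V_a`, where each `Hᵢ` is a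
hyperbolic plane `⟨1, −1⟩` and `V_a` is anisotropic. Non-degeneracy is stated via the
associated bilinear form `B(v,w) = (q(v+w) − q(v) − q(w))/2`. -/
theorem witt_decomposition_exists {F V : Type*} [Field F] [AddCommGroup V]
    [Module F V] [FiniteDimensional F V] (hF : (2 : F) ≠ 0)
    (Q : QuadraticForm F V)
    (hQ : ∀ v : V, (∀ w : V, QuadraticMap.polar Q v w / 2 = 0) → v = 0) :
    ∃ (k m : ℕ) (qa : QuadraticForm F (Fin m → F)),
      qa.Anisotropic ∧
      QuadraticMap.Equivalent Q
        ((QuadraticMap.pi fun _ : Fin k =>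
          QuadraticMap.weightedSumSquares F (![1, -1] : Fin 2 → F)).prod qa) := by
  have hrad : Q.radical = ⊥ := radical_eq_bot_of_separatingLeft fun v hv =>
    hQ v fun w => div_eq_zero_iff.2 (.inl (hv w))
  obtain ⟨k, m, qa, hqa, hequiv⟩ := witt_decomposition_exists_general Q hrad
  have : Invertible (2 : F) := invertibleOfNonzero hF
  exact ⟨k, m, qa, hqa, hequiv.trans
    ((Equivalent.pi fun _ => hyperbolicPlane_equivalent_weightedSumSquares).prod (.refl qa))⟩
end
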